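/- Let β ≥ 0 be real and let m ≥ n ≥ 0 and t ≥ s ≥ 0 be integers. Then ∫_ℂ |z|² · Z^{(β)}_{m,n}(z, conj(z)) · conj(Z^{(β)}_{t,s}(z, conj(z))) dν(z) = 0 if m−n ≠ t−s, and if m−n = t−s it equals [(−1)^{n+s} (−β−m)_n (−β−t)_s Γ(m−n+β+2)/(n!·s!)] · Σ_{j=0}^{n} Σ_{k=0}^{s} [(β+m−n+2)_{j+k} (−n)_j (−s)_k / ((β+m−n+1)_j (β+m−n+1)_k · j!·k!)]. -/

import Mathlib

/-!
Since `|z|² dν_β = dν_{β+1}`, the integral is an inner product with respect to the rotation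
invariant measure `ν_{β+1}`. A rotation by `u` multiplies `Z_{m,n}(z, z̄)` by `u ^ (m - n)`, whence
the orthogonality for `m - n ≠ t - s`. With `d = m - n = t - s`, the polynomial `Z_{m,n}(z, z̄)` is
`z ^ d` times the Laguerre polynomial `L_n^{(β+d)}(|z|²)`, so expanding both factors leaves the
moments `∫ |z|^{2(d+i)} dν_{β+1} = Γ(β + d + 2 + i) = Γ(β + d + 2) (β + d + 2)_i` with `i = j + k`,
which produce the Appell sum.
-/

open MeasureTheory Finset

/-- Pochhammer symbol `(a)_j = a (a+1) ⋯ (a+j-1)`. -/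
noncomputable def poch (a : ℝ) (j : ℕ) : ℝ := ∏ i ∈ Finset.range j, (a + i)

/-- The generalized 2D Laguerre polynomial `Z^{(β)}_{m,n}(z,w)` (for `m ≥ n`). -/
noncomputable def Zc (β : ℝ) (m n : ℕ) (z w : ℂ) : ℂ :=
  ∑ k ∈ Finset.range (n + 1),
    (((-1 : ℝ) ^ (n - k) * poch (β + 1) m /
        (k.factorial * (n - k).factorial * poch (β + 1) (m - k)) : ℝ) : ℂ) *
      z ^ (m - k) * w ^ (n - k)

open scoped ComplexConjugate

lemma poch_eq_ascPochhammer_eval (a : ℝ) (j : ℕ) : poch a j = (ascPochhammer ℝ j).eval a := by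
  induction j with
  | zero => simp [poch]
  | succ j ih => rw [ascPochhammer_succ_eval, ← ih, poch, prod_range_succ, poch]

lemma poch_pos {a : ℝ} (ha : 0 < a) (j : ℕ) : 0 < poch a j :=
  poch_eq_ascPochhammer_eval a j ▸ ascPochhammer_pos j a ha

lemma poch_add (a : ℝ) (i j : ℕ) : poch a (i + j) = poch a i * poch (a + i) j := by
  simp [poch, prod_range_add, add_assoc]

lemma poch_ne_zero_of_le {a : ℝ} {i j : ℕ} (hj : poch a j ≠ 0) (hij : i ≤ j) : poch a i ≠ 0 := by
  obtain ⟨k, rfl⟩ := Nat.exists_eq_add_of_le hij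
  exact left_ne_zero_of_mul (poch_add a i k ▸ hj)

lemma poch_neg (a : ℝ) (j : ℕ) : poch (-a) j = (-1) ^ j * poch (a - j + 1) j := by
  simp only [poch_eq_ascPochhammer_eval, ascPochhammer_eval_neg_eq_descPochhammer,
    descPochhammer_eval_eq_ascPochhammer]

lemma poch_neg_natCast (n j : ℕ) : poch (-(n : ℝ)) j = (-1) ^ j * n.descFactorial j := by
  rw [poch_eq_ascPochhammer_eval, ascPochhammer_eval_neg_eq_descPochhammer,
    descPochhammer_eval_eq_descFactorial]

lemma Gamma_add_natCast_eq_mul_poch {a : ℝ} (ha : ∀ i : ℕ, a ≠ -i) (j : ℕ) :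
    Real.Gamma (a + j) = Real.Gamma a * poch a j := by
  induction j with
  | zero => simp [poch]
  | succ j ih =>
    have haj : a + j ≠ 0 := fun h => ha j (eq_neg_of_add_eq_zero_left h)
    rw [Nat.cast_succ, ← add_assoc, Real.Gamma_add_one haj, ih, poch, poch, prod_range_succ]
    ring

/-- The coefficient of `x ^ j` in the Laguerre polynomial
`L_n^{(α)}(x) = ((α + 1)_n / n!) ₁F₁(-n; α + 1; x)`. -/
noncomputable def laguerreCoeff (α : ℝ) (n j : ℕ) : ℝ :=
  poch (α + 1) n / n.factorial * (poch (-(n : ℝ)) j / (poch (α + 1) j * j.factorial))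

lemma laguerreCoeff_add_natCast {β : ℝ} {d n j : ℕ} (hβ : poch (β + 1) (d + n) ≠ 0) (hj : j ≤ n) :
    laguerreCoeff (β + d) n j = (-1) ^ j * poch (β + 1) (d + n) /
      ((n - j).factorial * j.factorial * poch (β + 1) (d + j)) := by
  have hdj : poch (β + 1) (d + j) ≠ 0 := poch_ne_zero_of_le hβ (by lia)
  have hfact : ((n - j).factorial : ℝ) * n.descFactorial j = n.factorial :=
    mod_cast Nat.factorial_mul_descFactorial hj
  rw [poch_add] at hdj
  obtain ⟨hd_ne, hj_ne⟩ := mul_ne_zero_iff.mp hdj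
  rw [laguerreCoeff, poch_neg_natCast, poch_add, poch_add, ← hfact, add_right_comm β]
  have hdesc : (n.descFactorial j : ℝ) ≠ 0 :=
    right_ne_zero_of_mul (hfact ▸ Nat.cast_ne_zero.mpr n.factorial_ne_zero)
  field_simp

lemma Zc_add_eq_sum_laguerreCoeff {β : ℝ} {d n : ℕ} (hβ : poch (β + 1) (d + n) ≠ 0) (z w : ℂ) :
    Zc β (d + n) n z w
      = ∑ j ∈ range (n + 1), (laguerreCoeff (β + d) n j : ℂ) * (z ^ (d + j) * w ^ j) := by
  rw [Zc, ← sum_range_reflect]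
  refine sum_congr rfl fun j hj => ?_
  have hjn : j ≤ n := mem_range_succ_iff.mp hj
  rw [laguerreCoeff_add_natCast hβ hjn, Nat.add_sub_cancel, Nat.sub_sub_self hjn,
    show d + n - (n - j) = d + j by lia, mul_assoc]

lemma Zc_mul_mul {u v : ℂ} (huv : u * v = 1) {m n : ℕ} (hnm : n ≤ m) (β : ℝ) (z w : ℂ) :
    Zc β m n (u * z) (v * w) = u ^ m * v ^ n * Zc β m n z w := by
  rw [Zc, Zc, mul_sum]
  refine sum_congr rfl fun k hk => ?_
  have hkn : k ≤ n := mem_range_succ_iff.mp hk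
  have hpow : u ^ m * v ^ n = u ^ (m - k) * v ^ (n - k) := by
    rw [← Nat.sub_add_cancel (hkn.trans hnm), ← Nat.sub_add_cancel hkn, pow_add, pow_add,
      mul_mul_mul_comm, ← mul_pow, huv, one_pow, mul_one, Nat.add_sub_cancel, Nat.add_sub_cancel]
  rw [hpow, mul_pow, mul_pow]
  ring

lemma sum_laguerreCoeff_mul_laguerreCoeff_mul_poch (α γ c : ℝ) (n s : ℕ) :
    ∑ j ∈ range (n + 1), ∑ k ∈ range (s + 1),
        laguerreCoeff α n j * laguerreCoeff γ s k * poch c (j + k)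
      = poch (α + 1) n * poch (γ + 1) s / (n.factorial * s.factorial) *
          ∑ j ∈ range (n + 1), ∑ k ∈ range (s + 1),
            poch c (j + k) * poch (-(n : ℝ)) j * poch (-(s : ℝ)) k /
              (poch (α + 1) j * poch (γ + 1) k * j.factorial * k.factorial) := by
  simp only [mul_sum, laguerreCoeff]
  refine sum_congr rfl fun j _ => sum_congr rfl fun k _ => ?_
  ring

/-- The measure `ν_α` with density `π⁻¹ |z|^{2α} e^{−|z|²}` on `ℂ`, for which the polynomials
`Zc α m n z z̄` are orthogonal when `-1 < α`. -/
noncomputable def laguerreMeasure (α : ℝ) : Measure ℂ :=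
  volume.withDensity fun z =>
    ENNReal.ofReal (Real.pi⁻¹ * ‖z‖ ^ (2 * α) * Real.exp (-(‖z‖ ^ 2)))

lemma laguerreMeasure_univ {α : ℝ} (hα : -1 < α) :
    laguerreMeasure α Set.univ = ENNReal.ofReal (Real.Gamma (α + 1)) := by
  have hmass : ∫ z : ℂ, Real.pi⁻¹ * ‖z‖ ^ (2 * α) * Real.exp (-(‖z‖ ^ 2))
      = Real.Gamma (α + 1) := by
    simp_rw [← Real.rpow_two, mul_assoc]
    rw [integral_const_mul,
      Complex.integral_rpow_mul_exp_neg_rpow one_le_two (by linarith : -2 < 2 * α)]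
    field_simp
  have hΓ : 0 < Real.Gamma (α + 1) := Real.Gamma_pos_of_pos (by linarith)
  rw [laguerreMeasure, withDensity_apply _ .univ, setLIntegral_univ, ← hmass,
    ofReal_integral_eq_lintegral_ofReal]
  · by_contra h
    exact hΓ.ne (hmass ▸ (integral_undef h).symm)
  · exact .of_forall fun z => by positivity

lemma withDensity_norm_rpow_laguerreMeasure (α q : ℝ) :
    (laguerreMeasure α).withDensity (fun z => ENNReal.ofReal (‖z‖ ^ q))
      = laguerreMeasure (α + q / 2) := by
  rw [laguerreMeasure, laguerreMeasure, ← withDensity_mul _ (by fun_prop) (by fun_prop)]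
  refine withDensity_congr_ae ?_
  filter_upwards [Measure.ae_ne volume 0] with z hz
  have hpow : ‖z‖ ^ (2 * (α + q / 2)) = ‖z‖ ^ (2 * α) * ‖z‖ ^ q := by
    rw [← Real.rpow_add (norm_pos_iff.mpr hz)]
    ring_nf
  rw [Pi.mul_apply, ← ENNReal.ofReal_mul (by positivity), hpow]
  ring_nf

lemma lintegral_norm_rpow_laguerreMeasure {α q : ℝ} (h : -2 < 2 * α + q) :
    ∫⁻ z, ENNReal.ofReal (‖z‖ ^ q) ∂laguerreMeasure α
      = ENNReal.ofReal (Real.Gamma (α + q / 2 + 1)) := by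
  rw [← setLIntegral_univ, ← withDensity_apply _ .univ, withDensity_norm_rpow_laguerreMeasure,
    laguerreMeasure_univ (by linarith)]

lemma integrable_norm_rpow_laguerreMeasure {α q : ℝ} (h : -2 < 2 * α + q) :
    Integrable (fun z => ‖z‖ ^ q) (laguerreMeasure α) := by
  refine ⟨(measurable_norm.pow_const q).aestronglyMeasurable, ?_⟩
  rw [hasFiniteIntegral_iff_ofReal (.of_forall fun z => by positivity),
    lintegral_norm_rpow_laguerreMeasure h]
  exact ENNReal.ofReal_lt_top

lemma integral_norm_rpow_laguerreMeasure {α q : ℝ} (h : -2 < 2 * α + q) :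
    ∫ z, ‖z‖ ^ q ∂laguerreMeasure α = Real.Gamma (α + q / 2 + 1) := by
  rw [integral_eq_lintegral_of_nonneg_ae (.of_forall fun z => by positivity)
      (integrable_norm_rpow_laguerreMeasure h).aestronglyMeasurable,
    lintegral_norm_rpow_laguerreMeasure h,
    ENNReal.toReal_ofReal (Real.Gamma_pos_of_pos (by linarith)).le]

lemma normSq_pow_eq_norm_rpow (z : ℂ) (a : ℕ) : Complex.normSq z ^ a = ‖z‖ ^ (2 * a : ℝ) := by
  rw [Complex.normSq_eq_norm_sq, ← pow_mul, ← Real.rpow_natCast, Nat.cast_mul, Nat.cast_two]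

lemma integrable_normSq_pow_laguerreMeasure {α : ℝ} {a : ℕ} (h : -1 < α + a) :
    Integrable (fun z => Complex.normSq z ^ a) (laguerreMeasure α) := by
  simp_rw [normSq_pow_eq_norm_rpow]
  exact integrable_norm_rpow_laguerreMeasure (by linarith)

lemma integral_normSq_pow_laguerreMeasure {α : ℝ} {a : ℕ} (h : -1 < α + a) :
    ∫ z, Complex.normSq z ^ a ∂laguerreMeasure α = Real.Gamma (α + a + 1) := by
  simp_rw [normSq_pow_eq_norm_rpow]
  rw [integral_norm_rpow_laguerreMeasure (by linarith), mul_div_cancel_left₀ _ two_ne_zero]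

lemma integral_normSq_mul_laguerreMeasure (α : ℝ) (f : ℂ → ℂ) :
    ∫ z, (Complex.normSq z : ℂ) * f z ∂laguerreMeasure α = ∫ z, f z ∂laguerreMeasure (α + 1) := by
  have hshift := withDensity_norm_rpow_laguerreMeasure α 2
  rw [div_self two_ne_zero] at hshift
  rw [← hshift, integral_withDensity_eq_integral_toReal_smul (by fun_prop)
    (.of_forall fun z => ENNReal.ofReal_lt_top)]
  simp [Complex.normSq_eq_norm_sq]

lemma measurePreserving_withDensity_of_comp_eq {X : Type*} [MeasurableSpace X] {μ : Measure X}
    {g : X → X} (hg : MeasurePreserving g μ μ) (hge : MeasurableEmbedding g) {f : X → ENNReal}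
    (hf : ∀ x, f (g x) = f x) :
    MeasurePreserving g (μ.withDensity f) (μ.withDensity f) := by
  refine ⟨hg.measurable, Measure.ext fun s hs => ?_⟩
  rw [Measure.map_apply hg.measurable hs, withDensity_apply _ (hg.measurable hs),
    withDensity_apply _ hs, ← hg.setLIntegral_comp_preimage_emb hge f s]
  simp_rw [hf]

lemma measurePreserving_rotation_laguerreMeasure (α : ℝ) (c : Circle) :
    MeasurePreserving (rotation c) (laguerreMeasure α) (laguerreMeasure α) :=
  measurePreserving_withDensity_of_comp_eq (rotation c).measurePreserving
    (rotation c).toHomeomorph.measurableEmbedding fun z => by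
      rw [LinearIsometryEquiv.norm_map]

lemma exists_circle_pow_mul_conj_pow_eq_neg_one {a b : ℕ} (hab : a ≠ b) :
    ∃ c : Circle, (c : ℂ) ^ a * conj (c : ℂ) ^ b = -1 := by
  have hab' : (a : ℂ) - b ≠ 0 := sub_ne_zero.mpr (mod_cast hab)
  refine ⟨Circle.exp (Real.pi / (a - b)), ?_⟩
  rw [Circle.coe_exp, ← Complex.exp_conj, ← Complex.exp_nat_mul, ← Complex.exp_nat_mul,
    ← Complex.exp_add, ← Complex.exp_pi_mul_I]
  congr 1
  simp only [map_mul, Complex.conj_ofReal, Complex.conj_I]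
  push_cast
  field_simp
  ring

lemma integral_eq_zero_of_comp_eq_neg {X E : Type*} [MeasurableSpace X] [NormedAddCommGroup E]
    [NormedSpace ℝ E] {μ : Measure X} {g : X → X} (hg : MeasurePreserving g μ μ)
    (hge : MeasurableEmbedding g) {f : X → E} (hf : ∀ x, f (g x) = -f x) : ∫ x, f x ∂μ = 0 := by
  have : IsAddTorsionFree E := .of_isTorsionFree ℝ E
  simp_rw [← self_eq_neg, ← integral_neg, ← hf, hg.integral_comp hge]

lemma integral_Zc_mul_conj_Zc_eq_zero {μ : Measure ℂ}
    (hμ : ∀ c : Circle, MeasurePreserving (rotation c) μ μ) {m n t s : ℕ} (hnm : n ≤ m)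
    (hst : s ≤ t) (h : m + s ≠ n + t) (β γ : ℝ) :
    ∫ z, Zc β m n z (conj z) * conj (Zc γ t s z (conj z)) ∂μ = 0 := by
  obtain ⟨c, hc⟩ := exists_circle_pow_mul_conj_pow_eq_neg_one h
  have hcc : (c : ℂ) * conj (c : ℂ) = 1 := by simp [Complex.mul_conj]
  refine integral_eq_zero_of_comp_eq_neg (hμ c)
    (rotation c).toHomeomorph.measurableEmbedding fun z => ?_
  rw [rotation_apply, map_mul, Zc_mul_mul hcc hnm, Zc_mul_mul hcc hst]
  simp only [map_mul, map_pow, Complex.conj_conj]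
  linear_combination Zc β m n z (conj z) * conj (Zc γ t s z (conj z)) * hc

lemma Zc_mul_conj_Zc_eq_sum {β γ : ℝ} {d n s : ℕ} (hβ : poch (β + 1) (d + n) ≠ 0)
    (hγ : poch (γ + 1) (d + s) ≠ 0) (z : ℂ) :
    Zc β (d + n) n z (conj z) * conj (Zc γ (d + s) s z (conj z))
      = ((∑ j ∈ range (n + 1), ∑ k ∈ range (s + 1),
          laguerreCoeff (β + d) n j * laguerreCoeff (γ + d) s k *
            Complex.normSq z ^ (d + (j + k)) : ℝ) : ℂ) := by
  rw [Zc_add_eq_sum_laguerreCoeff hβ, Zc_add_eq_sum_laguerreCoeff hγ, map_sum, sum_mul_sum]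
  push_cast
  refine sum_congr rfl fun j _ => sum_congr rfl fun k _ => ?_
  simp only [map_mul, map_pow, Complex.conj_ofReal, Complex.conj_conj, ← Complex.mul_conj]
  ring

lemma integral_Zc_mul_conj_Zc_eq_sum {μ : Measure ℂ} {β γ : ℝ} {d n s : ℕ}
    (hβ : poch (β + 1) (d + n) ≠ 0) (hγ : poch (γ + 1) (d + s) ≠ 0)
    (hμ : ∀ i, Integrable (fun z => Complex.normSq z ^ (d + i)) μ) :
    ∫ z, Zc β (d + n) n z (conj z) * conj (Zc γ (d + s) s z (conj z)) ∂μ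
      = ((∑ j ∈ range (n + 1), ∑ k ∈ range (s + 1),
          laguerreCoeff (β + d) n j * laguerreCoeff (γ + d) s k *
            ∫ z, Complex.normSq z ^ (d + (j + k)) ∂μ : ℝ) : ℂ) := by
  simp_rw [Zc_mul_conj_Zc_eq_sum hβ hγ, integral_complex_ofReal]
  rw [integral_finsetSum _ fun j _ => integrable_finsetSum _ fun k _ => (hμ (j + k)).const_mul _]
  refine congrArg _ (sum_congr rfl fun j _ => ?_)
  rw [integral_finsetSum _ fun k _ => (hμ (j + k)).const_mul _]
  simp_rw [integral_const_mul]

lemma integral_Zc_mul_conj_Zc_laguerreMeasure {α β γ : ℝ} {d n s : ℕ}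
    (hβ : poch (β + 1) (d + n) ≠ 0) (hγ : poch (γ + 1) (d + s) ≠ 0) (hα : -1 < α + d) :
    ∫ z, Zc β (d + n) n z (conj z) * conj (Zc γ (d + s) s z (conj z)) ∂laguerreMeasure α
      = ((Real.Gamma (α + d + 1) * ∑ j ∈ range (n + 1), ∑ k ∈ range (s + 1),
          laguerreCoeff (β + d) n j * laguerreCoeff (γ + d) s k *
            poch (α + d + 1) (j + k) : ℝ) : ℂ) := by
  have hαi (i : ℕ) : -1 < α + (d + i : ℕ) := by
    push_cast
    linarith [(i.cast_nonneg : (0 : ℝ) ≤ i)]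
  have hmoment (i : ℕ) : ∫ z, Complex.normSq z ^ (d + i) ∂laguerreMeasure α
      = Real.Gamma (α + d + 1) * poch (α + d + 1) i := by
    rw [integral_normSq_pow_laguerreMeasure (hαi i), ← Gamma_add_natCast_eq_mul_poch
      fun l => by linarith [(l.cast_nonneg : (0 : ℝ) ≤ l)]]
    push_cast
    ring_nf
  rw [integral_Zc_mul_conj_Zc_eq_sum hβ hγ fun i => integrable_normSq_pow_laguerreMeasure (hαi i)]
  simp_rw [hmoment, mul_sum, mul_left_comm]

/-- The inequality `hβ` is the condition for absolute convergence of the integral, while `hm` and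
`ht` say that no denominator in the two polynomials vanishes. -/
theorem laguerre2D_integral_absSq_general (β : ℝ) (m n t s : ℕ) (hmn : n ≤ m) (hts : s ≤ t)
    (hβ : -4 < 2 * β + ((m : ℝ) - n) + ((t : ℝ) - s))
    (hm : poch (β + 1) m ≠ 0) (ht : poch (β + 1) t ≠ 0) :
    (((m : ℤ) - n ≠ (t : ℤ) - s) →
      ∫ z : ℂ, ((Complex.normSq z : ℝ) : ℂ) * Zc β m n z (conj z) *
          conj (Zc β t s z (conj z)) ∂laguerreMeasure β = 0) ∧
    (((m : ℤ) - n = (t : ℤ) - s) →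
      ∫ z : ℂ, ((Complex.normSq z : ℝ) : ℂ) * Zc β m n z (conj z) *
          conj (Zc β t s z (conj z)) ∂laguerreMeasure β
        = ((((-1 : ℝ) ^ (n + s) * poch (-β - m) n * poch (-β - t) s *
              Real.Gamma ((m : ℝ) - n + β + 2) / (n.factorial * s.factorial)) *
            ∑ j ∈ range (n + 1), ∑ k ∈ range (s + 1),
              poch (β + (m : ℝ) - n + 2) (j + k) * poch (-(n : ℝ)) j * poch (-(s : ℝ)) k /
                (poch (β + (m : ℝ) - n + 1) j * poch (β + (m : ℝ) - n + 1) k *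
                  j.factorial * k.factorial) : ℝ) : ℂ)) := by
  simp_rw [mul_assoc (Complex.normSq _ : ℂ), integral_normSq_mul_laguerreMeasure]
  constructor
  · intro hne
    exact integral_Zc_mul_conj_Zc_eq_zero (measurePreserving_rotation_laguerreMeasure _) hmn hts
      (by lia) β β
  · intro heq
    obtain ⟨d, rfl⟩ := Nat.exists_eq_add_of_le' hmn
    obtain rfl : t = d + s := by lia
    push_cast at hβ
    have hpoch (r : ℕ) : poch (β + d + 1) r = (-1) ^ r * poch (-β - (d + r : ℕ)) r := by
      rw [← neg_neg (β + d + 1), poch_neg]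
      push_cast
      ring_nf
    rw [integral_Zc_mul_conj_Zc_laguerreMeasure hm ht (by linarith),
      sum_laguerreCoeff_mul_laguerreCoeff_mul_poch, hpoch n, hpoch s, ← mul_assoc,
      show β + 1 + d + 1 = β + d + 2 by ring,
      show β + ((d + n : ℕ) : ℝ) - n = β + d by push_cast; ring,
      show ((d + n : ℕ) : ℝ) - n + β + 2 = β + d + 2 by push_cast; ring]
    congr 2
    ring

/-- Integral formula for `∫ |z|² Z^{(β)}_{m,n}(z,z̄) conj(Z^{(β)}_{t,s}(z,z̄)) dν(z)`,
with `dν(z) = π⁻¹ |z|^{2β} e^{−|z|²} dA(z)`. -/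
theorem laguerre2D_integral_absSq (β : ℝ) (hβ : 0 ≤ β) (m n t s : ℕ)
    (hmn : n ≤ m) (hts : s ≤ t)
    (ν : Measure ℂ)
    (hν : ν = volume.withDensity (fun z =>
      ENNReal.ofReal (Real.pi⁻¹ * ‖z‖ ^ (2 * β) * Real.exp (-(‖z‖ ^ 2))))) :
    (((m : ℤ) - n ≠ (t : ℤ) - s) →
      ∫ z : ℂ, ((Complex.normSq z : ℝ) : ℂ) * Zc β m n z (starRingEnd ℂ z) *
          starRingEnd ℂ (Zc β t s z (starRingEnd ℂ z)) ∂ν = 0) ∧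
    (((m : ℤ) - n = (t : ℤ) - s) →
      ∫ z : ℂ, ((Complex.normSq z : ℝ) : ℂ) * Zc β m n z (starRingEnd ℂ z) *
          starRingEnd ℂ (Zc β t s z (starRingEnd ℂ z)) ∂ν
        = ((((-1 : ℝ) ^ (n + s) * poch (-β - m) n * poch (-β - t) s *
              Real.Gamma ((m : ℝ) - n + β + 2) / (n.factorial * s.factorial)) *
            ∑ j ∈ Finset.range (n + 1), ∑ k ∈ Finset.range (s + 1),
              poch (β + (m : ℝ) - n + 2) (j + k) * poch (-(n : ℝ)) j * poch (-(s : ℝ)) k /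
                (poch (β + (m : ℝ) - n + 1) j * poch (β + (m : ℝ) - n + 1) k *
                  j.factorial * k.factorial) : ℝ) : ℂ)) := by
  subst hν
  exact laguerre2D_integral_absSq_general β m n t s hmn hts (by rify at hmn hts; linarith)
    (poch_pos (by positivity) m).ne' (poch_pos (by positivity) t).ne'
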